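/- Assume the contrast C is G-invariant, i.e. C(g • a) = C(a) for all g ∈ G and a ∈ A, and that g ↦ C(m (g • x)) is μ-integrable. Then for every mechanism m : A → A, every x ∈ A and all g, k ∈ G, the expected generic contrast is invariant under simultaneous conjugation of the mechanism and translation of the cause: ⟨C⟩_{m, x} = ⟨C⟩_{m_g, k • x}, where m_g : A → A is the conjugated mechanism a ↦ g • m(g⁻¹ • a). -/

import Mathlib

open MeasureTheory

/-- Expected Generic Contrast: `⟨C⟩_{m,x} = ∫_G C(m (g • x)) dμ(g)`. -/
noncomputable def expectedGenericContrast {G : Type*} [Group G] [MeasurableSpace G]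
    {A : Type*} [MulAction G A] (μ : Measure G) (C : A → ℝ) (m : A → A) (x : A) : ℝ :=
  ∫ g, C (m (g • x)) ∂μ

section

variable {G : Type*} [Group G] [MeasurableSpace G] [MeasurableMul G]
  {A : Type*} [MulAction G A] (μ : Measure G)

theorem expectedGenericContrast_smul [μ.IsMulRightInvariant] (C : A → ℝ) (m : A → A) (k : G)
    (x : A) : expectedGenericContrast μ C m (k • x) = expectedGenericContrast μ C m x := by
  simpa only [expectedGenericContrast, smul_smul] using
    integral_mul_right_eq_self (μ := μ) (fun h => C (m (h • x))) k

theorem expectedGenericContrast_conj [μ.IsMulLeftInvariant] {C : A → ℝ} {g : G}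
    (hC : ∀ a, C (g • a) = C a) (m : A → A) (x : A) :
    expectedGenericContrast μ C (fun a => g • m (g⁻¹ • a)) x
      = expectedGenericContrast μ C m x := by
  simpa only [expectedGenericContrast, hC, smul_smul] using
    integral_mul_left_eq_self (μ := μ) (fun h => C (m (h • x))) g⁻¹

variable {μ}

theorem integrable_contrast_smul [μ.IsMulRightInvariant] {C : A → ℝ} {m : A → A} {x : A}
    (hint : Integrable (fun h : G => C (m (h • x))) μ) (k : G) :
    Integrable (fun h : G => C (m (h • k • x))) μ := by
  simpa only [smul_smul] using hint.comp_mul_right k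

theorem integrable_contrast_conj [μ.IsMulLeftInvariant] {C : A → ℝ} {m : A → A} {x : A} {g : G}
    (hC : ∀ a, C (g • a) = C a) (hint : Integrable (fun h : G => C (m (h • x))) μ) :
    Integrable (fun h : G => C (g • m (g⁻¹ • h • x))) μ := by
  simpa only [hC, smul_smul] using hint.comp_mul_left g⁻¹

theorem egc_conjugation_translation_invariant_general
    [μ.IsMulLeftInvariant] [μ.IsMulRightInvariant] {C : A → ℝ} {m : A → A} {x : A} {g : G}
    (hC : ∀ a, C (g • a) = C a) (hint : Integrable (fun h : G => C (m (h • x))) μ) (k : G) :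
    Integrable (fun h : G => C (g • m (g⁻¹ • h • k • x))) μ ∧
      expectedGenericContrast μ C m x
        = expectedGenericContrast μ C (fun a => g • m (g⁻¹ • a)) (k • x) := by
  refine ⟨integrable_contrast_conj hC (integrable_contrast_smul hint k), Eq.symm ?_⟩
  calc expectedGenericContrast μ C (fun a => g • m (g⁻¹ • a)) (k • x)
    _ = expectedGenericContrast μ C m (k • x) := expectedGenericContrast_conj μ hC m (k • x)
    _ = expectedGenericContrast μ C m x := expectedGenericContrast_smul μ C m k x

end

/-- for a `G`-invariant contrast, the expected generic contrast is invariant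
under simultaneous conjugation of the mechanism and translation of the cause. -/
theorem egc_conjugation_translation_invariant
    {G : Type*} [Group G] [TopologicalSpace G] [IsTopologicalGroup G] [CompactSpace G]
    [MeasurableSpace G] [BorelSpace G]
    {A : Type*} [MeasurableSpace A] [MulAction G A] [MeasurableSMul G A]
    (μ : Measure G) [μ.IsHaarMeasure] [IsProbabilityMeasure μ] [μ.IsMulRightInvariant]
    (m : A → A) (C : A → ℝ)
    (hC : ∀ (g : G) (a : A), C (g • a) = C a) (x : A)
    (hint : Integrable (fun g => C (m (g • x))) μ) (g k : G) :
    expectedGenericContrast μ C m x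
      = expectedGenericContrast μ C (fun a => g • m (g⁻¹ • a)) (k • x) :=
  (egc_conjugation_translation_invariant_general (hC g) hint k).2
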